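/- arXiv:1705.05781 — 2 statements merged into one kernel-verified Lean document; each statement's English description precedes it below -/
import Mathlib

section
/- Let L be a finite modular semilattice. The map φ : L → Csub(P(L)) defined by φ(l) = {p ∈ L^ir : p ≤ l} is a well-defined order isomorphism from L onto the family Csub(P(L)) of consistent subspaces of P(L) ordered by inclusion; its inverse ψ is given by ψ(I) = ⋁_{x ∈ I} x for nonempty I (this join exists) and ψ(∅) = min L. -/
/-- The join of `a` and `b` exists (there is a least upper bound of the pair). -/
def JoinExists {α : Type*} [Preorder α] (a b : α) : Prop :=
  ∃ j, IsLUB ({a, b} : Set α) j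

/-- `a` and `b` are incomparable. -/
def Incomp {α : Type*} [Preorder α] (a b : α) : Prop :=
  ¬ a ≤ b ∧ ¬ b ≤ a

/-- A collinear triple: pairwise incomparable elements whose pairwise joins all exist
and coincide. -/
def Collinear3 {α : Type*} [Preorder α] (x y z : α) : Prop :=
  Incomp x y ∧ Incomp y z ∧ Incomp z x ∧
  ∃ j, IsLUB ({x, y} : Set α) j ∧ IsLUB ({y, z} : Set α) j ∧ IsLUB ({z, x} : Set α) j

/-- `l` is ∨-irreducible: `l` is not the minimum element, and whenever `l` is the join
of `a` and `b`, `l = a` or `l = b`. -/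
def JoinIrred {α : Type*} [Preorder α] (l : α) : Prop :=
  (¬ ∀ x, l ≤ x) ∧ ∀ a b, IsLUB ({a, b} : Set α) l → l = a ∨ l = b

/-- A modular semilattice: (existing joins witness that) every principal ideal is a
(modular) lattice, the modular law holds in every principal ideal, and the join of any
three elements exists whenever the three pairwise joins exist. -/
def ModularSemilattice (α : Type*) [SemilatticeInf α] : Prop :=
  (∀ a b : α, (∃ u, a ≤ u ∧ b ≤ u) → JoinExists a b) ∧
  (∀ x a b c : α, a ≤ x → b ≤ x → c ≤ x → a ≤ c →
    ∀ j, IsLUB ({a, b} : Set α) j → IsLUB ({a, b ⊓ c} : Set α) (j ⊓ c)) ∧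
  (∀ x y z : α, JoinExists x y → JoinExists y z → JoinExists z x →
    ∃ j, IsLUB ({x, y, z} : Set α) j)
/-- A consistent subspace: a downward-closed subset, no two of whose elements are
inconsistent, that is closed under the collinearity relation. -/
def IsCSub {P : Type*} (le : P → P → Prop) (ic : P → P → Prop)
    (C : P → P → P → Prop) (X : Set P) : Prop :=
  (∀ p q, le p q → q ∈ X → p ∈ X) ∧
  (∀ p q, p ∈ X → q ∈ X → ¬ ic p q) ∧
  (∀ p q r, p ∈ X → q ∈ X → C p q r → r ∈ X)
/-- The poset of ∨-irreducible elements of `L`. -/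
abbrev Irr (L : Type*) [SemilatticeInf L] := {l : L // JoinIrred l}

/-- `φ(l) = {p ∈ Lⁱʳ : p ≤ l}`. -/
def phiMap (L : Type*) [SemilatticeInf L] (l : L) : Set (Irr L) :=
  {p : Irr L | (p : L) ≤ l}

/-- The induced order on `Lⁱʳ`. -/
def indLE (L : Type*) [SemilatticeInf L] : Irr L → Irr L → Prop :=
  fun p q => p ≤ q

/-- The induced inconsistency relation on `Lⁱʳ`: `p ⌣ q` iff `p ∨ q` does not exist. -/
def indIC (L : Type*) [SemilatticeInf L] : Irr L → Irr L → Prop :=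
  fun p q => ¬ JoinExists (p : L) (q : L)

/-- The induced collinearity relation on `Lⁱʳ`. -/
def indC (L : Type*) [SemilatticeInf L] : Irr L → Irr L → Irr L → Prop :=
  fun p q r => Collinear3 (p : L) (q : L) (r : L)

/-! Let `p` be a ∨-irreducible element below `a ∨ b`. Shrinking `a` to a minimal `q ≤ a` with
`p ≤ q ∨ b`, and then `b` to a minimal `r ≤ b` with `p ≤ q ∨ r`, modularity makes `q` and `r`
∨-irreducible, because the interval `[p ∧ r, p]` is isomorphic to `[r, p ∨ r] = [r, q ∨ r]`.
Hence `p` is collinear with ∨-irreducibles below `a` and `b` unless it already lies below one of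
them, and the elements `l` with `φ(l) ⊆ X` are closed under existing joins when `X` is closed under
collinearity. Moreover `l ∨ q` exists as soon as `q` is consistent with all ∨-irreducibles below
`l`, since `l` is built from these by binary joins. So if `X` is a consistent subspace, a maximal
`l` with `φ(l) ⊆ X` absorbs every `q ∈ X`, that is, `φ(l) = X`. -/

section SemilatticeSup

variable {M : Type*} [SemilatticeSup M] {p a b : M}

theorem joinIrred_iff_supIrred [IsCodirectedOrder M] : JoinIrred p ↔ SupIrred p := by
  refine and_congr (not_congr ⟨IsBot.isMin, IsMin.isBot⟩) ⟨fun h a b hab => ?_, fun h a b hab => ?_⟩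
  · exact (h a b (hab ▸ isLUB_pair)).imp Eq.symm Eq.symm
  · exact (h (isLUB_pair.unique hab)).imp Eq.symm Eq.symm

theorem collinear3_of_supIrred (hp : SupIrred p) (hpab : p ≤ a ⊔ b) (ha : a ≤ p ⊔ b)
    (hb : b ≤ p ⊔ a) (hpa : ¬ p ≤ a) (hpb : ¬ p ≤ b) : Collinear3 a b p := by
  have hp_ne_sup : a ⊔ b ≠ p := fun h => (hp.2 h).elim (fun h => hpa h.ge) fun h => hpb h.ge
  have hap : ¬ a ≤ p := fun h => hp_ne_sup ((sup_le h (hb.trans (sup_le le_rfl h))).antisymm hpab)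
  have hbp : ¬ b ≤ p := fun h => hp_ne_sup ((sup_le (ha.trans (sup_le le_rfl h)) h).antisymm hpab)
  have hab_bp : a ⊔ b = b ⊔ p :=
    (sup_le (ha.trans (sup_comm p b).le) le_sup_left).antisymm (sup_le le_sup_right hpab)
  have hab_pa : a ⊔ b = p ⊔ a :=
    (sup_le le_sup_right hb).antisymm (sup_le hpab le_sup_left)
  exact ⟨⟨fun h => hpb (hpab.trans (sup_le h le_rfl)), fun h => hpa (hpab.trans (sup_le le_rfl h))⟩,
    ⟨hbp, hpb⟩, ⟨hpa, hap⟩, a ⊔ b, isLUB_pair, hab_bp ▸ isLUB_pair, hab_pa ▸ isLUB_pair⟩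

end SemilatticeSup

section ModularLattice

variable {M : Type*} [Lattice M] [IsModularLattice M] {p a b x y : M}

theorem le_or_le_of_supIrred_of_sup_eq (hp : SupIrred p) (hbx : b ≤ x) (hby : b ≤ y)
    (h : x ⊔ y = p ⊔ b) : p ≤ x ∨ p ≤ y := by
  have hx : b ⊔ p ⊓ x = x := by
    rw [← sup_inf_assoc_of_le p hbx, sup_comm, ← h, inf_eq_right]
    exact le_sup_left
  have hy : b ⊔ p ⊓ y = y := by
    rw [← sup_inf_assoc_of_le p hby, sup_comm, ← h, inf_eq_right]
    exact le_sup_right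
  have hp_le : p ≤ p ⊓ x ⊔ p ⊓ y ⊔ b := calc
    p ≤ x ⊔ y := h ▸ le_sup_left
    _ = p ⊓ x ⊔ p ⊓ y ⊔ b := by rw [sup_comm _ b, sup_sup_distrib_left, hx, hy]
  have hp_eq : p ⊓ x ⊔ p ⊓ y = p :=
    eq_of_le_of_inf_le_of_le_sup (sup_le inf_le_left inf_le_left)
      (le_sup_of_le_left (inf_le_inf_left p hbx)) hp_le
  exact (hp.2 hp_eq).imp inf_eq_left.1 inf_eq_left.1

theorem le_sup_of_minimal_le_sup (h : Minimal (p ≤ · ⊔ b) a) : a ≤ p ⊔ b := by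
  have hp_le : p ≤ a ⊓ (p ⊔ b) ⊔ b := by
    rw [sup_comm, ← sup_inf_assoc_of_le a le_sup_right, sup_comm b a]
    exact le_inf h.prop le_sup_left
  exact (h.le_of_le hp_le inf_le_left).trans inf_le_right

theorem supIrred_of_minimal_le_sup (hp : SupIrred p) (hpb : ¬ p ≤ b)
    (h : Minimal (p ≤ · ⊔ b) a) : SupIrred a := by
  have hab : a ⊔ b = p ⊔ b :=
    (sup_le (le_sup_of_minimal_le_sup h) le_sup_right).antisymm (sup_le h.prop le_sup_right)
  refine ⟨fun ha => hpb (h.prop.trans (sup_le (ha.isBot b) le_rfl)), fun c d hcd => ?_⟩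
  have hp_le : p ≤ c ⊔ b ∨ p ≤ d ⊔ b :=
    le_or_le_of_supIrred_of_sup_eq hp le_sup_right le_sup_right
      (by rw [← sup_sup_distrib_right, hcd, hab])
  exact hp_le.imp (fun hc => h.eq_of_le hc (hcd ▸ le_sup_left))
    fun hd => h.eq_of_le hd (hcd ▸ le_sup_right)

theorem exists_supIrred_collinear3 [WellFoundedLT M] (hp : SupIrred p) (hpab : p ≤ a ⊔ b)
    (hpa : ¬ p ≤ a) (hpb : ¬ p ≤ b) :
    ∃ q ≤ a, ∃ r ≤ b, SupIrred q ∧ SupIrred r ∧ Collinear3 q r p := by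
  obtain ⟨q, hqa, hq⟩ := exists_minimal_le_of_wellFoundedLT (p ≤ · ⊔ b) a hpab
  obtain ⟨r, hrb, hr⟩ :=
    exists_minimal_le_of_wellFoundedLT (p ≤ · ⊔ q) b (hq.prop.trans (sup_comm q b).le)
  have hpqr : p ≤ q ⊔ r := hr.prop.trans (sup_comm r q).le
  have hq' : Minimal (p ≤ · ⊔ r) q :=
    ⟨hpqr, fun _ hc => hq.le_of_le (hc.trans (sup_le_sup_left hrb _))⟩
  have hpq : ¬ p ≤ q := fun h => hpa (h.trans hqa)
  have hpr : ¬ p ≤ r := fun h => hpb (h.trans hrb)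
  exact ⟨q, hqa, r, hrb, supIrred_of_minimal_le_sup hp hpr hq',
    supIrred_of_minimal_le_sup hp hpq hr, collinear3_of_supIrred hp hpqr
      (le_sup_of_minimal_le_sup hq') (le_sup_of_minimal_le_sup hr) hpq hpr⟩

end ModularLattice

section PrincipalIdeal

variable {L : Type*} [SemilatticeInf L] {u : L}

theorem isLUB_image_coe_Iic {s : Set (Set.Iic u)} {j : Set.Iic u} :
    IsLUB (Subtype.val '' s) (j : L) ↔ IsLUB s j := by
  have gc : GaloisConnection (Subtype.val : Set.Iic u → L)
      fun x => ⟨x ⊓ u, inf_le_right⟩ := fun a _ => (le_inf_iff.trans (and_iff_left a.2)).symm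
  exact ⟨IsLUB.of_image Subtype.coe_le_coe, fun h => gc.isLUB_l_image h⟩

theorem isLUB_pair_coe_Iic {a b j : Set.Iic u} :
    IsLUB ({(a : L), (b : L)} : Set L) j ↔ IsLUB {a, b} j := by
  rw [← isLUB_image_coe_Iic, Set.image_pair]

theorem joinIrred_coe_Iic {p : Set.Iic u} : JoinIrred (p : L) ↔ JoinIrred p := by
  refine and_congr (not_congr ⟨fun h x => h x, fun h x => ?_⟩) ⟨fun h a b hab => ?_, ?_⟩
  · exact (show (p : L) ≤ x ⊓ u from h ⟨x ⊓ u, inf_le_right⟩).trans inf_le_left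
  · exact (h a b (isLUB_pair_coe_Iic.2 hab)).imp Subtype.ext Subtype.ext
  · intro h a b hab
    have ha : a ≤ u := (hab.1 (Set.mem_insert a {b})).trans p.2
    have hb : b ≤ u := (hab.1 (Set.mem_insert_of_mem a rfl)).trans p.2
    exact (h ⟨a, ha⟩ ⟨b, hb⟩ (isLUB_pair_coe_Iic.1 hab)).imp
      (congrArg Subtype.val) (congrArg Subtype.val)

theorem Collinear3.coe_Iic {a b c : Set.Iic u} (h : Collinear3 a b c) :
    Collinear3 (a : L) (b : L) (c : L) := by
  obtain ⟨hab, hbc, hca, j, hj⟩ := h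
  exact ⟨hab, hbc, hca, j, hj.imp isLUB_pair_coe_Iic.2
    (And.imp isLUB_pair_coe_Iic.2 isLUB_pair_coe_Iic.2)⟩

end PrincipalIdeal

theorem JoinIrred.induction {α : Type*} [PartialOrder α] [WellFoundedLT α] {motive : α → Prop}
    (isBot : ∀ a, IsBot a → motive a) (joinIrred : ∀ a, JoinIrred a → motive a)
    (isLUB : ∀ a b j, IsLUB {a, b} j → motive a → motive b → motive j) (l : α) : motive l := by
  induction l using WellFoundedLT.induction with
  | ind l ih =>
    by_cases hbot : ∀ x, l ≤ x
    · exact isBot l hbot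
    by_cases hirr : ∀ a b, IsLUB {a, b} l → l = a ∨ l = b
    · exact joinIrred l ⟨hbot, hirr⟩
    push Not at hirr
    obtain ⟨a, b, hl, hla, hlb⟩ := hirr
    exact isLUB a b l hl (ih a ((hl.1 (Set.mem_insert a {b})).lt_of_ne' hla))
      (ih b ((hl.1 (Set.mem_insert_of_mem a rfl)).lt_of_ne' hlb))

theorem exists_isBot_of_wellFoundedLT (α : Type*) [Preorder α] [IsCodirectedOrder α]
    [WellFoundedLT α] [Nonempty α] : ∃ a : α, IsBot a := by
  obtain ⟨a, ha⟩ := exists_minimal_of_wellFoundedLT (fun _ : α => True) (by simp)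
  exact ⟨a, (minimal_true.1 ha).isBot⟩

section PhiMap

variable {L : Type*} [SemilatticeInf L] {l l' : L}

theorem phiMap_mono (h : l ≤ l') : phiMap L l ⊆ phiMap L l' :=
  fun _ hp => le_trans hp h

theorem phiMap_eq_empty_of_isBot (hl : IsBot l) : phiMap L l = ∅ :=
  Set.eq_empty_of_forall_notMem fun p hp => p.2.1 fun x => le_trans hp (hl x)

variable [WellFoundedLT L]

theorem isLUB_image_phiMap (l : L) : IsLUB (Subtype.val '' phiMap L l) l := by
  refine ⟨Set.forall_mem_image.2 fun _ hp => hp, fun u hu => ?_⟩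
  replace hu : ∀ p, JoinIrred p → p ≤ l → p ≤ u := fun p hp hpl => hu ⟨⟨p, hp⟩, hpl, rfl⟩
  induction l using JoinIrred.induction with
  | isBot l hl => exact hl u
  | joinIrred l hl => exact hu l hl le_rfl
  | isLUB a b j hj iha ihb =>
    rw [isLUB_le_iff hj, upperBounds_insert, upperBounds_singleton]
    exact ⟨iha fun p hp hpa => hu p hp (hpa.trans (hj.1 (Set.mem_insert a {b}))),
      ihb fun p hp hpb => hu p hp (hpb.trans (hj.1 (Set.mem_insert_of_mem a rfl)))⟩

theorem phiMap_subset_phiMap_iff : phiMap L l ⊆ phiMap L l' ↔ l ≤ l' :=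
  ⟨fun h => (isLUB_image_phiMap l).mono (isLUB_image_phiMap l') (Set.image_mono h), phiMap_mono⟩

end PhiMap

namespace ModularSemilattice

variable {L : Type*} [SemilatticeInf L] {a b j l u : L} {X : Set (Irr L)}

theorem joinExists_of_le (hL : ModularSemilattice L) (ha : a ≤ u) (hb : b ≤ u) :
    JoinExists a b :=
  hL.1 a b ⟨u, ha, hb⟩

theorem exists_isLUB_Iic (hL : ModularSemilattice L) (a b : Set.Iic u) :
    ∃ j, IsLUB {a, b} j := by
  obtain ⟨j, hj⟩ := hL.joinExists_of_le a.2 b.2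
  have hju : j ≤ u := hj.2 (by simpa using ⟨a.2, b.2⟩)
  exact ⟨⟨j, hju⟩, isLUB_pair_coe_Iic.1 hj⟩

/-- The lattice structure on the principal ideal of `u` in a modular semilattice. It extends the
induced meet-semilattice structure, so that the order is unchanged. -/
noncomputable abbrev latticeIic (hL : ModularSemilattice L) (u : L) : Lattice (Set.Iic u) where
  __ := (inferInstance : SemilatticeInf (Set.Iic u))
  __ := SemilatticeSup.ofIsLUB (fun a b => (hL.exists_isLUB_Iic a b).choose)
    fun a b => (hL.exists_isLUB_Iic a b).choose_spec

theorem isModularLattice_Iic (hL : ModularSemilattice L) (u : L) :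
    letI := hL.latticeIic u
    IsModularLattice (Set.Iic u) := by
  let := hL.latticeIic u
  refine ⟨fun {a} b {c} hac => ?_⟩
  have hlub : IsLUB {a, b ⊓ c} ((a ⊔ b) ⊓ c) :=
    isLUB_pair_coe_Iic.1 (hL.2.1 u a b c a.2 b.2 c.2 hac _ (isLUB_pair_coe_Iic.2 isLUB_pair))
  exact (hlub.unique isLUB_pair).le

theorem exists_joinIrred_collinear3 [WellFoundedLT L] (hL : ModularSemilattice L) {p : L}
    (hp : JoinIrred p) (hj : IsLUB {a, b} j) (hpj : p ≤ j) (hpa : ¬ p ≤ a) (hpb : ¬ p ≤ b) :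
    ∃ q ≤ a, ∃ r ≤ b, JoinIrred q ∧ JoinIrred r ∧ Collinear3 q r p := by
  let := hL.latticeIic j
  have := hL.isModularLattice_Iic j
  lift a to Set.Iic j using hj.1 (Set.mem_insert a {b})
  lift b to Set.Iic j using hj.1 (Set.mem_insert_of_mem _ rfl)
  lift p to Set.Iic j using hpj
  have hsup : a ⊔ b = ⟨j, le_rfl⟩ := isLUB_pair.unique (isLUB_pair_coe_Iic.1 hj)
  obtain ⟨q, hqa, r, hrb, hq, hr, hqrp⟩ := exists_supIrred_collinear3
    (joinIrred_iff_supIrred.1 (joinIrred_coe_Iic.1 hp)) (hsup ▸ p.2) hpa hpb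
  exact ⟨q, hqa, r, hrb, joinIrred_coe_Iic.2 (joinIrred_iff_supIrred.2 hq),
    joinIrred_coe_Iic.2 (joinIrred_iff_supIrred.2 hr), hqrp.coe_Iic⟩

theorem isCSub_phiMap (hL : ModularSemilattice L) (l : L) :
    IsCSub (indLE L) (indIC L) (indC L) (phiMap L l) := by
  refine ⟨fun p q hpq hq => le_trans (show (p : L) ≤ q from hpq) hq,
    fun p q hp hq hpq => hpq (hL.joinExists_of_le hp hq), ?_⟩
  rintro p q r hp hq ⟨-, -, -, j, hpq, hqr, -⟩
  have hjl : j ≤ l := hpq.2 (by simpa using ⟨hp, hq⟩)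
  exact (hqr.1 (Set.mem_insert_of_mem _ rfl)).trans hjl

theorem phiMap_subset_of_isLUB [WellFoundedLT L] (hL : ModularSemilattice L)
    (hX : ∀ p q r, p ∈ X → q ∈ X → indC L p q r → r ∈ X) (hj : IsLUB {a, b} j)
    (ha : phiMap L a ⊆ X) (hb : phiMap L b ⊆ X) : phiMap L j ⊆ X := by
  intro p hpj
  by_cases hpa : (p : L) ≤ a
  · exact ha hpa
  by_cases hpb : (p : L) ≤ b
  · exact hb hpb
  obtain ⟨q, hqa, r, hrb, hq, hr, hqrp⟩ := hL.exists_joinIrred_collinear3 p.2 hj hpj hpa hpb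
  exact hX ⟨q, hq⟩ ⟨r, hr⟩ p (ha hqa) (hb hrb) hqrp

theorem joinExists_of_isLUB (hL : ModularSemilattice L) (hj : IsLUB {a, b} j)
    (ha : JoinExists a u) (hb : JoinExists b u) : JoinExists j u := by
  obtain ⟨k, hk⟩ := hL.2.2 a b u ⟨j, hj⟩ hb (by rwa [JoinExists, Set.pair_comm])
  have hjk : j ≤ k := hj.2 (upperBounds_mono_set (by grind) hk.1)
  exact hL.joinExists_of_le hjk (hk.1 (by simp))

theorem joinExists_of_forall_joinIrred [WellFoundedLT L] (hL : ModularSemilattice L)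
    (h : ∀ p, JoinIrred p → p ≤ l → JoinExists p u) : JoinExists l u := by
  induction l using JoinIrred.induction with
  | isBot l hl => exact hL.joinExists_of_le (hl u) le_rfl
  | joinIrred l hl => exact h l hl le_rfl
  | isLUB a b j hj iha ihb =>
    exact hL.joinExists_of_isLUB hj
      (iha fun p hp hpa => h p hp (hpa.trans (hj.1 (Set.mem_insert a {b}))))
      (ihb fun p hp hpb => h p hp (hpb.trans (hj.1 (Set.mem_insert_of_mem a rfl))))

theorem exists_phiMap_eq [WellFoundedLT L] [WellFoundedGT L] [Nonempty L]
    (hL : ModularSemilattice L) (hX : IsCSub (indLE L) (indIC L) (indC L) X) :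
    ∃ l, phiMap L l = X := by
  obtain ⟨hdown, hcons, hcol⟩ := hX
  obtain ⟨m, hm⟩ := exists_isBot_of_wellFoundedLT L
  obtain ⟨l, hl⟩ := exists_maximal_of_wellFoundedGT (phiMap L · ⊆ X)
    ⟨m, (phiMap_eq_empty_of_isBot hm).subset.trans X.empty_subset⟩
  refine ⟨l, hl.prop.antisymm fun q hq => ?_⟩
  obtain ⟨j, hj⟩ : JoinExists l (q : L) := hL.joinExists_of_forall_joinIrred fun p hp hpl =>
    not_not.1 (hcons ⟨p, hp⟩ q (hl.prop hpl) hq)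
  have hjX : phiMap L j ⊆ X :=
    hL.phiMap_subset_of_isLUB hcol hj hl.prop fun p hpq => hdown p q hpq hq
  exact (hj.1 (Set.mem_insert_of_mem l rfl)).trans (hl.le_of_ge hjX (hj.1 (Set.mem_insert l _)))

end ModularSemilattice

theorem stmt1_general (L : Type*) [SemilatticeInf L] [WellFoundedLT L] [WellFoundedGT L]
    [Nonempty L] (hL : ModularSemilattice L) :
    (∀ l : L, IsCSub (indLE L) (indIC L) (indC L) (phiMap L l)) ∧
    (∀ l l' : L, l ≤ l' ↔ phiMap L l ⊆ phiMap L l') ∧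
    (∀ X : Set (Irr L), IsCSub (indLE L) (indIC L) (indC L) X →
      ∃ l : L, phiMap L l = X) ∧
    (∀ X : Set (Irr L), IsCSub (indLE L) (indIC L) (indC L) X → X.Nonempty →
      ∃ j : L, IsLUB (Subtype.val '' X) j ∧ phiMap L j = X) ∧
    (∃ m : L, (∀ x : L, m ≤ x) ∧ phiMap L m = ∅) := by
  refine ⟨hL.isCSub_phiMap, fun l l' => phiMap_subset_phiMap_iff.symm,
    fun X => hL.exists_phiMap_eq, fun X hX _ => ?_, ?_⟩
  · obtain ⟨l, rfl⟩ := hL.exists_phiMap_eq hX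
    exact ⟨l, isLUB_image_phiMap l, rfl⟩
  · obtain ⟨m, hm⟩ := exists_isBot_of_wellFoundedLT L
    exact ⟨m, hm, phiMap_eq_empty_of_isBot hm⟩

/-- For a finite modular semilattice `L`, `φ(l) = {p ∈ Lⁱʳ : p ≤ l}` is an order
isomorphism from `L` onto the family of consistent subspaces of `P(L)` ordered by
inclusion; its inverse `ψ` is given by the join for nonempty subspaces and by
`min L` for the empty subspace. -/
theorem stmt1 (L : Type*) [SemilatticeInf L] [Fintype L] [Nonempty L]
    (hL : ModularSemilattice L) :
    (∀ l : L, IsCSub (indLE L) (indIC L) (indC L) (phiMap L l)) ∧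
    (∀ l l' : L, l ≤ l' ↔ phiMap L l ⊆ phiMap L l') ∧
    (∀ X : Set (Irr L), IsCSub (indLE L) (indIC L) (indC L) X →
      ∃ l : L, phiMap L l = X) ∧
    (∀ X : Set (Irr L), IsCSub (indLE L) (indIC L) (indC L) X → X.Nonempty →
      ∃ j : L, IsLUB (Subtype.val '' X) j ∧ phiMap L j = X) ∧
    (∃ m : L, (∀ x : L, m ≤ x) ∧ phiMap L m = ∅) :=
  stmt1_general L hL
end

section
/- Let P be a PPIP. An element X of the meet-semilattice Csub(P) is ∨-irreducible if and only if X is a principal ideal, i.e., X = {x ∈ P : x ≤ p} for some p ∈ P. -/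
/-- A PPIP: a poset (given by `le`) with a symmetric inconsistency relation `ic` and a
symmetric collinearity relation `C` satisfying (IC1), (IC2), (CT1), (CT2), Regularity,
weak Triangle, (CC1) and (CC2). -/
structure IsPPIP (P : Type*) (le : P → P → Prop) (ic : P → P → Prop)
    (C : P → P → P → Prop) : Prop where
  le_refl : ∀ p, le p p
  le_trans : ∀ p q r, le p q → le q r → le p r
  le_antisymm : ∀ p q, le p q → le q p → p = q
  ic_symm : ∀ p q, ic p q → ic q p
  c_symm_left : ∀ p q r, C p q r → C q p r
  c_symm_right : ∀ p q r, C p q r → C p r q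
  ic1 : ∀ p q, ic p q → ¬ ∃ w, le p w ∧ le q w
  ic2 : ∀ p q p' q', ic p q → le p p' → le q q' → ic p' q'
  ct1 : ∀ p q r, C p q r →
    (¬ le p q ∧ ¬ le q p) ∧ (¬ le q r ∧ ¬ le r q) ∧ (¬ le r p ∧ ¬ le p r)
  ct2 : ∀ p q r w, C p q r → le p w → le q w → le r w
  regularity : ∀ p q r r', C p q r → le r' r → ¬ le r' p → ¬ le r' q →
    ∃ p' q', le p' p ∧ le q' q ∧ C p' q' r'
  weak_triangle : ∀ a b c p q, C a c p → C b c q →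
    (∀ u v, u ∈ ({a, b, c, p, q} : Set P) → v ∈ ({a, b, c, p, q} : Set P) → ¬ ic u v) →
    ((∃ x, C a b x ∧ C p q x ∧
        List.Pairwise (fun u v => ¬ le u v ∧ ¬ le v u) [a, b, c, p, q, x] ∧
        (∀ u v w, u ∈ ({a, b, c, p, q, x} : Set P) → v ∈ ({a, b, c, p, q, x} : Set P) →
          w ∈ ({a, b, c, p, q, x} : Set P) → C u v w →
          ({u, v, w} : Multiset P) = {a, c, p} ∨ ({u, v, w} : Multiset P) = {b, c, q} ∨
          ({u, v, w} : Multiset P) = {a, b, x} ∨ ({u, v, w} : Multiset P) = {p, q, x})) ∨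
      (∃ a', le a' a ∧ C b q a') ∨
      C b q p ∨
      (∃ a' p', le a' a ∧ le p' p ∧ C q a' p') ∨
      (le q a ∨ le q p))
  cc1 : ∀ p q r, C p q r → ¬ ic p q ∧ ¬ ic q r ∧ ¬ ic r p
  cc2 : ∀ p q r x, C p q r →
    ((ic x p ∧ ic x q) ∨ (ic x q ∧ ic x r) ∨ (ic x p ∧ ic x r)) ∨
    (¬ ic x p ∧ ¬ ic x q ∧ ¬ ic x r)
/-!
A subspace `X` is the join of the principal ideals of its points, so if it is completely
∨-irreducible it is one of them. Conversely, a principal ideal with its top deleted is still a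
subspace: no collinear triple with two points below `p` produces `p` itself, since its members are
incomparable. This is then the greatest subspace strictly below the ideal, which forces complete
∨-irreducibility. Finally, ∨-irreducibility coincides with the complete notion as soon as lower
covers exist: if `m ⋖ l`, every `x < l` with `x ≰ m` would give `l = m ∨ x`.
-/

section Order

variable {α : Type*}

/-- `l` is completely ∨-irreducible: it belongs to every set, finite or not, of which it is the
least upper bound. Taking the empty set shows that such an `l` is not the minimum. -/
def CompletelyJoinIrred [Preorder α] (l : α) : Prop :=
  ∀ S : Set α, IsLUB S l → l ∈ S

theorem CompletelyJoinIrred.joinIrred [Preorder α] {l : α} (hl : CompletelyJoinIrred l) :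
    JoinIrred l :=
  ⟨fun hbot => hl ∅ (isLUB_empty_iff.mpr hbot), fun a b => hl {a, b}⟩

theorem completelyJoinIrred_of_isGreatest_Iio [PartialOrder α] {l m : α}
    (hm : IsGreatest (Set.Iio l) m) : CompletelyJoinIrred l := by
  intro S hS
  by_contra hlS
  have hmS : m ∈ upperBounds S := fun x hx =>
    hm.2 ((hS.1 hx).lt_of_ne (ne_of_mem_of_not_mem hx hlS))
  exact (hS.2 hmS).not_gt hm.1

variable [SemilatticeInf α] {l m x : α}

theorem isLUB_pair_of_covBy (hm : m ⋖ l) (hxl : x ≤ l) (hxm : ¬ x ≤ m) : IsLUB {m, x} l := by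
  refine ⟨by simp [upperBounds, hm.le, hxl], fun u hu => ?_⟩
  obtain ⟨hmu, hxu⟩ : m ≤ u ∧ x ≤ u := by simpa [upperBounds] using hu
  rcases hm.eq_or_eq (le_inf hmu hm.le) inf_le_right with hinf | hinf
  · exact absurd (hinf ▸ le_inf hxu hxl) hxm
  · exact inf_eq_right.mp hinf

theorem JoinIrred.isGreatest_Iio_of_covBy (hl : JoinIrred l) (hm : m ⋖ l) :
    IsGreatest (Set.Iio l) m := by
  refine ⟨hm.lt, fun x hx => ?_⟩
  by_contra hxm
  exact (hl.2 m x (isLUB_pair_of_covBy hm hx.le hxm)).elim hm.ne' hx.ne'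

theorem joinIrred_iff_completelyJoinIrred [IsStronglyCoatomic α] :
    JoinIrred l ↔ CompletelyJoinIrred l := by
  refine ⟨fun hl => ?_, CompletelyJoinIrred.joinIrred⟩
  obtain ⟨x, hlx⟩ := not_forall.mp hl.1
  obtain ⟨m, -, hm⟩ := exists_le_covBy_of_lt (inf_lt_left.mpr hlx)
  exact completelyJoinIrred_of_isGreatest_Iio (hl.isGreatest_Iio_of_covBy hm)

end Order

section ConsistentSubspace

variable {P : Type*} {le ic : P → P → Prop} {C : P → P → P → Prop}

theorem IsCSub.inter {X Y : Set P} (hX : IsCSub le ic C X) (hY : IsCSub le ic C Y) :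
    IsCSub le ic C (X ∩ Y) :=
  ⟨fun p q hpq hq => ⟨hX.1 p q hpq hq.1, hY.1 p q hpq hq.2⟩,
    fun p q hp hq => hX.2.1 p q hp.1 hq.1,
    fun p q r hp hq hC => ⟨hX.2.2 p q r hp.1 hq.1 hC, hY.2.2 p q r hp.2 hq.2 hC⟩⟩

theorem isCSub_principal [IsTrans P le] (ic1 : ∀ p q, ic p q → ¬ ∃ w, le p w ∧ le q w)
    (ct2 : ∀ p q r w, C p q r → le p w → le q w → le r w) (p : P) :
    IsCSub le ic C {x | le x p} :=
  ⟨fun _ _ hab hb => trans_of le hab hb, fun a b ha hb hab => ic1 a b hab ⟨p, ha, hb⟩,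
    fun a b r ha hb hC => ct2 a b r p hC ha hb⟩

theorem IsCSub.principal_sdiff_singleton [Std.Antisymm le] {p : P}
    (hp : IsCSub le ic C {x | le x p}) (ct1 : ∀ p q r, C p q r → ¬ le p r) :
    IsCSub le ic C ({x | le x p} \ {p}) := by
  refine ⟨?_, fun a b ha hb => hp.2.1 a b ha.1 hb.1, ?_⟩
  · rintro a b hab ⟨hb, hbp⟩
    refine ⟨hp.1 a b hab hb, ?_⟩
    rintro rfl
    exact hbp (antisymm_of le hb hab)
  · rintro a b r ⟨ha, -⟩ ⟨hb, -⟩ hC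
    refine ⟨hp.2.2 a b r ha hb hC, ?_⟩
    rintro rfl
    exact ct1 a b r hC ha

theorem isGreatest_Iio_principal [Std.Refl le] {p : P} (hp : IsCSub le ic C {x | le x p})
    (hp' : IsCSub le ic C ({x | le x p} \ {p})) :
    IsGreatest (Set.Iio (⟨_, hp⟩ : {X : Set P // IsCSub le ic C X})) ⟨_, hp'⟩ := by
  refine ⟨Set.sdiff_singleton_ssubset.mpr (refl_of le p), fun Y (hY : Y < ⟨_, hp⟩) => ?_⟩
  have hpY : p ∉ (Y : Set P) := fun hmem => hY.not_ge fun x hx => Y.2.1 x p hx hmem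
  exact Set.subset_sdiff_singleton hY.le hpY

theorem isLUB_setOf_principal [Std.Refl le] (hprincipal : ∀ p, IsCSub le ic C {x | le x p})
    (X : {X : Set P // IsCSub le ic C X}) :
    IsLUB {Y : {X : Set P // IsCSub le ic C X} | ∃ p ∈ X.1, Y.1 = {x | le x p}} X := by
  constructor
  · rintro ⟨_, _⟩ ⟨p, hp, rfl⟩ x hx
    exact X.2.1 x p hx hp
  · intro U hU p hp
    have hpU : ⟨_, hprincipal p⟩ ≤ U := hU ⟨p, hp, rfl⟩
    exact hpU (refl_of le p)

theorem completelyJoinIrred_iff_exists_eq_principal [IsPartialOrder P le]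
    (ic1 : ∀ p q, ic p q → ¬ ∃ w, le p w ∧ le q w) (ct1 : ∀ p q r, C p q r → ¬ le p r)
    (ct2 : ∀ p q r w, C p q r → le p w → le q w → le r w)
    (X : {X : Set P // IsCSub le ic C X}) :
    CompletelyJoinIrred X ↔ ∃ p : P, (X : Set P) = {x | le x p} := by
  constructor
  · intro hX
    obtain ⟨p, -, hXp⟩ := hX _ (isLUB_setOf_principal (isCSub_principal ic1 ct2) X)
    exact ⟨p, hXp⟩
  · obtain ⟨_, hX⟩ := X
    rintro ⟨p, rfl⟩
    exact completelyJoinIrred_of_isGreatest_Iio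
      (isGreatest_Iio_principal hX (hX.principal_sdiff_singleton ct1))

end ConsistentSubspace

theorem IsPPIP.isPartialOrder {P : Type*} {le ic : P → P → Prop} {C : P → P → P → Prop}
    (h : IsPPIP P le ic C) : IsPartialOrder P le where
  refl := h.le_refl
  trans := h.le_trans
  antisymm := h.le_antisymm

theorem stmt6_general (P : Type*) (le ic : P → P → Prop) (C : P → P → P → Prop)
    [IsPartialOrder P le] [IsStronglyCoatomic {X : Set P // IsCSub le ic C X}]
    (ic1 : ∀ p q, ic p q → ¬ ∃ w, le p w ∧ le q w) (ct1 : ∀ p q r, C p q r → ¬ le p r)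
    (ct2 : ∀ p q r w, C p q r → le p w → le q w → le r w)
    (X : {X : Set P // IsCSub le ic C X}) :
    JoinIrred X ↔ ∃ p : P, (X : Set P) = {x | le x p} := by
  let _ : SemilatticeInf {X : Set P // IsCSub le ic C X} :=
    Subtype.semilatticeInf fun _ _ => IsCSub.inter
  exact joinIrred_iff_completelyJoinIrred.trans
    (completelyJoinIrred_iff_exists_eq_principal ic1 ct1 ct2 X)

/-- In the meet-semilattice `Csub(P)` of a PPIP `P`, an element is ∨-irreducible if and
only if it is a principal ideal of `P`. -/
theorem stmt6 (P : Type*) [Fintype P] (le ic : P → P → Prop) (C : P → P → P → Prop)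
    (h : IsPPIP P le ic C) (X : {X : Set P // IsCSub le ic C X}) :
    JoinIrred X ↔ ∃ p : P, (X : Set P) = {x | le x p} := by
  have := h.isPartialOrder
  exact stmt6_general P le ic C h.ic1 (fun p q r hC => (h.ct1 p q r hC).2.2.2) h.ct2 X
end
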